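/- Let n ≥ 3 be an odd integer, let k ≥ 2 be an integer, and set d = 4(1 − 4k^n)^n. Then d + 4 = 4(1 − (4k^n − 1)^n), so ℚ(√(d + 4)) = ℚ(√(1 − (4k^n − 1)^n)), and n divides the class number of the imaginary quadratic field ℚ(√(d + 4)). -/

import Mathlib

/-- The quadratic field `ℚ(√d)`, realized as the subfield of `ℂ` generated over `ℚ`
by a complex square root of `d`. -/
noncomputable def Qsqrt (d : ℤ) : IntermediateField ℚ ℂ :=
  IntermediateField.adjoin ℚ {((d : ℂ) ^ ((1 : ℂ) / 2))}

/-- The class number of `ℚ(√d)`: the order of the ideal class group of its ring of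
integers. -/
noncomputable def classNumSqrt (d : ℤ) : ℕ :=
  Nat.card (ClassGroup (NumberField.RingOfIntegers (Qsqrt d)))

theorem cg_aux {R : Type*} [CommRing R] [IsDedekindDomain R] (α α' m : R) (n : ℕ) (hn : 0 < n)
    (h : α * α' = m ^ n) (hc : IsCoprime α α') (h0 : α ≠ 0)
    (H : ∀ p : ℕ, p.Prime → p ∣ n → ∀ (β : R) (u : Rˣ), β ^ p ≠ u * α) :
    n ∣ Nat.card (ClassGroup R) := by
  classical
  have h1 : Ideal.span {α} * Ideal.span {α'} = (Ideal.span {m}) ^ n := by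
    rw [Ideal.span_singleton_mul_span_singleton, h, Ideal.span_singleton_pow]
  have hc' : IsCoprime (Ideal.span {α}) (Ideal.span {α'}) :=
    (Ideal.isCoprime_span_singleton_iff _ _).2 hc
  let _ : GCDMonoid (Ideal R) := UniqueFactorizationMonoid.toGCDMonoid _
  obtain ⟨a, ha⟩ := exists_eq_pow_of_mul_eq_pow_of_coprime hc' h1
  have ha0 : a ≠ 0 := by
    rintro rfl
    rw [zero_pow hn.ne'] at ha
    exact h0 (by simpa using ha)
  have key : ∀ j : ℕ, (ClassGroup.mk0 ⟨a, mem_nonZeroDivisors_of_ne_zero ha0⟩) ^ j = 1 ↔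
      (a ^ j).IsPrincipal := by
    intro j
    rw [← map_pow, ClassGroup.mk0_eq_one_iff]
    simp
  rw [← orderOf_eq_of_pow_and_pow_div_prime
    (x := ClassGroup.mk0 ⟨a, mem_nonZeroDivisors_of_ne_zero ha0⟩) hn ?_ ?_]
  · exact orderOf_dvd_natCard _
  · rw [key, ← ha]; exact ⟨⟨α, rfl⟩⟩
  · intro p hp hpn hh
    rw [key] at hh
    obtain ⟨⟨β, hβ⟩⟩ := hh
    have : Ideal.span {β ^ p} = Ideal.span {α} := by
      rw [ha, ← Ideal.span_singleton_pow]
      change _ = Ideal.span _ at hβ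
      rw [← hβ, ← pow_mul, Nat.div_mul_cancel hpn]
    rw [Ideal.span_singleton_eq_span_singleton] at this
    obtain ⟨u, hu⟩ := this.symm
    exact H p hp hpn β u (by rw [← hu, mul_comm])

def rs (x u : ℤ) : ℕ → ℤ × ℤ
  | 0 => (1, 0)
  | j + 1 => (x * (rs x u j).1 + u * (rs x u j).2, (rs x u j).1 + x * (rs x u j).2)

theorem rs_complex (x u : ℤ) (B : ℂ) (hB : B ^ 2 = u) (j : ℕ) :
    ((x : ℂ) + B) ^ j = (rs x u j).1 + (rs x u j).2 * B := by
  induction j with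
  | zero => simp [rs]
  | succ j ih =>
    rw [pow_succ, ih]; simp only [rs]; push_cast
    linear_combination ((rs x u j).2 : ℂ) * hB

theorem rs_modEq (x u u' M : ℤ) (h : u ≡ u' [ZMOD M]) (j : ℕ) :
    (rs x u j).1 ≡ (rs x u' j).1 [ZMOD M] ∧ (rs x u j).2 ≡ (rs x u' j).2 [ZMOD M] := by
  induction j with
  | zero => simp [rs]
  | succ j ih =>
    simp only [rs]
    exact ⟨(ih.1.mul_left _).add (h.mul ih.2), ih.1.add (ih.2.mul_left _)⟩

theorem rs_dvd (x u : ℤ) (j : ℕ) :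
    x ∣ (rs x u (2 * j + 1)).1 ∧ x ∣ (rs x u (2 * j)).2 := by
  induction j with
  | zero => simp [rs]
  | succ j ih =>
    have e : x ∣ (rs x u (2 * (j + 1))).2 := by
      rw [show 2 * (j + 1) = (2 * j + 1) + 1 by ring]
      rw [rs]
      exact dvd_add ih.1 (dvd_mul_right _ _)
    refine ⟨?_, e⟩
    rw [rs]
    exact dvd_add (dvd_mul_right _ _) (e.mul_left _)

theorem rs_neg (x u : ℤ) (j : ℕ) :
    (rs (-x) u j).1 = (-1) ^ j * (rs x u j).1 ∧ (rs (-x) u j).2 = - (-1) ^ j * (rs x u j).2 := by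
  induction j with
  | zero => simp [rs]
  | succ j ih =>
    simp only [rs, ih.1, ih.2]
    constructor <;> ring

theorem rs_add (x u : ℤ) (i j : ℕ) :
    (rs x u (i + j)).1 = (rs x u i).1 * (rs x u j).1 + u * ((rs x u i).2 * (rs x u j).2) ∧
    (rs x u (i + j)).2 = (rs x u i).1 * (rs x u j).2 + (rs x u i).2 * (rs x u j).1 := by
  induction j with
  | zero => simp [rs]
  | succ j ih =>
    rw [← add_assoc]
    simp only [rs, ih.1, ih.2]
    constructor <;> ring

theorem rs_norm (x u : ℤ) (j : ℕ) :
    (rs x u j).1 ^ 2 - u * (rs x u j).2 ^ 2 = (x ^ 2 - u) ^ j := by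
  induction j with
  | zero => simp [rs]
  | succ j ih =>
    rw [pow_succ (x ^ 2 - u), ← ih]
    simp only [rs]
    ring

theorem rs_pos (j : ℕ) : 0 < (rs 1 2 j).1 ∧ 0 ≤ (rs 1 2 j).2 := by
  induction j with
  | zero => simp [rs]
  | succ j ih => simp only [rs]; omega

theorem rs_bound (j : ℕ) : (rs 1 2 (2 * j)).1 + (rs 1 2 (2 * j)).2 ≤ 7 ^ j := by
  induction j with
  | zero => simp [rs]
  | succ j ih =>
    have := rs_pos (2 * j)
    rw [show 2 * (j + 1) = 2 * j + 1 + 1 by ring]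
    simp only [rs]
    rw [pow_succ]
    omega

/-- The arithmetic core for products. -/
theorem core_aux (k : ℤ) (hk : 2 ≤ k) (n e : ℕ) (hen : e ≤ n) (C F : ℤ) (hC : 0 < C) (hF : 0 < F)
    (hC2 : C < 2 ^ e) (hF2 : F < 2 ^ e) (hco : IsCoprime C F) : ¬ k ^ n ∣ C * F := by
  intro h
  obtain ⟨l, hl, hlk⟩ := Int.exists_prime_and_dvd (n := k) (by omega)
  wlog hl0 : 0 ≤ l generalizing l
  · exact this (-l) hl.neg (by simpa using hlk) (by omega)
  have hl2 : 2 ≤ l := by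
    have := hl.ne_zero
    have : l ≠ 1 := fun h => hl.not_isUnit (by simp [h])
    omega
  have h1 : l ^ n ∣ C * F := (pow_dvd_pow_of_dvd hlk n).trans h
  have h2 : (2 : ℤ) ^ e ≤ l ^ n := (pow_le_pow_right₀ (by norm_num) hen).trans
    (pow_le_pow_left₀ (by norm_num) hl2 n)
  by_cases hd : l ∣ C
  · have hF' : IsCoprime (l ^ n) F := by
      apply IsCoprime.pow_left
      exact hco.of_isCoprime_of_dvd_left hd
    have := Int.le_of_dvd hC (hF'.dvd_of_dvd_mul_right h1)
    omega
  · have hF' : IsCoprime (l ^ n) C := by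
      apply IsCoprime.pow_left
      exact (Prime.coprime_iff_not_dvd hl).2 hd
    have := Int.le_of_dvd hF (hF'.dvd_of_dvd_mul_left h1)
    omega

theorem rs_core (k : ℤ) (hk : 2 ≤ k) (n p : ℕ) (hpn : p ≤ n) (hp : 3 ≤ p) (hodd : Odd p)
    (x : ℤ) (hx : x = 1 ∨ x = -1) (h : (rs x 2 p).1 ≡ 1 [ZMOD 4 * k ^ n]) : False := by
  have h1 : 4 * k ^ n ∣ (rs 1 2 p).1 - x := by
    have := h.symm.dvd
    rcases hx with rfl | rfl
    · exact this
    · rw [(rs_neg 1 2 p).1, hodd.neg_one_pow] at this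
      rw [← dvd_neg]
      have e : -((rs 1 2 p).1 - -1) = -1 * (rs 1 2 p).1 - 1 := by ring
      rwa [e]
  have h4 : 4 ∣ (rs 1 2 p).1 - x := (dvd_mul_right _ _).trans h1
  have dbl : ∀ q, 0 < q → ∃ E C : ℤ, 0 < C ∧ 0 < E ∧ E + C ≤ 7 ^ q ∧ E ^ 2 - 2 * C ^ 2 = 1 ∧
      (rs 1 2 (4 * q)).1 = E ^ 2 + 2 * C ^ 2 ∧ (rs 1 2 (4 * q)).2 = 2 * E * C := by
    intro q hq
    refine ⟨(rs 1 2 (2 * q)).1, (rs 1 2 (2 * q)).2, ?_, (rs_pos _).1, rs_bound q, ?_, ?_, ?_⟩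
    · obtain ⟨r, rfl⟩ : ∃ r, q = r + 1 := ⟨q - 1, by omega⟩
      rw [show 2 * (r + 1) = 2 * r + 1 + 1 by ring]
      rw [rs]
      have := rs_pos (2 * r + 1)
      simp only
      omega
    · rw [rs_norm, pow_mul]; norm_num
    · rw [show 4 * q = 2 * q + 2 * q by ring, (rs_add _ _ _ _).1]; ring
    · rw [show 4 * q = 2 * q + 2 * q by ring, (rs_add _ _ _ _).2]; ring
  have hcop : ∀ E C : ℤ, E ^ 2 - 2 * C ^ 2 = 1 → IsCoprime C E := fun E C h =>
    ⟨-2 * C, E, by linear_combination h⟩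
  obtain ⟨r, hr⟩ := hodd
  rcases Nat.even_or_odd' r with ⟨q, rfl | rfl⟩
  · obtain ⟨E, C, hC, hCE, hb, hN, hA, hB⟩ := dbl q (by omega)
    have hp' : p = 4 * q + 1 := by omega
    have hR : (rs 1 2 p).1 = 1 + 4 * (C * (E + C)) := by
      rw [hp', rs, hA, hB]; simp only; linear_combination hN
    rw [hR] at h1 h4
    have hx1 : x = 1 := by omega
    rw [hx1, add_sub_cancel_left] at h1
    have h1 := Int.dvd_of_mul_dvd_mul_left (by norm_num) h1
    have hlt : (7 : ℤ) ^ q < 2 ^ p := by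
      calc (7 : ℤ) ^ q ≤ (2 ^ 3) ^ q := pow_le_pow_left₀ (by norm_num) (by norm_num) q
        _ = 2 ^ (3 * q) := by rw [pow_mul]
        _ < 2 ^ p := pow_lt_pow_right₀ (by norm_num) (by omega)
    refine core_aux k hk n p hpn C (E + C) hC (by omega) (by omega) (by omega) ?_ h1
    simpa using (hcop E C hN).add_mul_left_right 1
  · obtain ⟨E, C, hC, hE, hb, hN, hA, hB⟩ := dbl (q + 1) (by omega)
    have hCE : C < E := by nlinarith
    have hp' : p = 4 * q + 3 := by omega
    have hR : (rs 1 2 p).1 = -1 + 4 * (C * (E - C)) := by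
      have e : 4 * (q + 1) = p + 1 := by omega
      rw [e, rs] at hA hB
      simp only at hA hB
      linear_combination 2 * hB - hA - hN
    rw [hR] at h1 h4
    have hx1 : x = -1 := by omega
    rw [hx1, add_sub_cancel_left] at h1
    have h1 := Int.dvd_of_mul_dvd_mul_left (by norm_num) h1
    have hlt : (7 : ℤ) ^ (q + 1) ≤ 2 ^ p := by
      calc (7 : ℤ) ^ (q + 1) ≤ (2 ^ 3) ^ (q + 1) := pow_le_pow_left₀ (by norm_num) (by norm_num) _
        _ = 2 ^ (3 * (q + 1)) := by rw [pow_mul]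
        _ ≤ 2 ^ p := pow_le_pow_right₀ (by norm_num) (by omega)
    refine core_aux k hk n p hpn C (E - C) hC (by omega) (by omega) (by omega) ?_ h1
    simpa [sub_eq_add_neg] using (hcop E C hN).add_mul_left_right (-1)

theorem Qsqrt_root_sq (d : ℤ) : ((d : ℂ) ^ ((1 : ℂ) / 2)) ^ 2 = d := by
  simp

theorem Qsqrt_four (d : ℤ) : Qsqrt (4 * d) = Qsqrt d := by
  have h1 := Qsqrt_root_sq (4 * d)
  have h2 := Qsqrt_root_sq d
  unfold Qsqrt
  set a := ((4 * d : ℤ) : ℂ) ^ ((1 : ℂ) / 2)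
  set b := (d : ℂ) ^ ((1 : ℂ) / 2)
  have h3 : a ^ 2 = (2 * b) ^ 2 := by rw [h1, mul_pow, h2]; push_cast; ring
  have two : ∀ K : IntermediateField ℚ ℂ, (2 : ℂ) ∈ K := fun K => ofNat_mem K 2
  apply le_antisymm
  · rw [IntermediateField.adjoin_simple_le_iff]
    have hb := IntermediateField.mem_adjoin_simple_self ℚ b
    rcases sq_eq_sq_iff_eq_or_eq_neg.1 h3 with h | h <;> rw [h]
    · exact mul_mem (two _) hb
    · exact neg_mem (mul_mem (two _) hb)
  · rw [IntermediateField.adjoin_simple_le_iff]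
    have ha := IntermediateField.mem_adjoin_simple_self ℚ a
    rcases sq_eq_sq_iff_eq_or_eq_neg.1 h3 with h | h
    · have : b = a / 2 := by rw [h]; ring
      rw [this]; exact div_mem ha (two _)
    · have : b = -(a / 2) := by rw [h]; ring
      rw [this]; exact neg_mem (div_mem ha (two _))

theorem Qsqrt_mem (D : ℤ) (ω : ℂ) (hω : ω ^ 2 = D) (z : ℂ)
    (hz : z ∈ IntermediateField.adjoin ℚ {ω}) : ∃ x y : ℚ, z = x + y * ω := by
  induction hz using IntermediateField.adjoin_induction with
  | mem x hx => exact ⟨0, 1, by simp at hx; simp [hx]⟩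
  | algebraMap x => exact ⟨x, 0, by simp⟩
  | add a b _ _ ha hb =>
    obtain ⟨x, y, rfl⟩ := ha
    obtain ⟨x', y', rfl⟩ := hb
    exact ⟨x + x', y + y', by push_cast; ring⟩
  | mul a b _ _ ha hb =>
    obtain ⟨x, y, rfl⟩ := ha
    obtain ⟨x', y', rfl⟩ := hb
    exact ⟨x * x' + D * y * y', x * y' + y * x', by
      push_cast; linear_combination (y * y' : ℂ) * hω⟩
  | inv a _ ha =>
    obtain ⟨x, y, rfl⟩ := ha
    by_cases h0 : (x : ℂ) - y * ω = 0
    · refine ⟨(2 * x)⁻¹, 0, ?_⟩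
      have : (x : ℂ) + y * ω = 2 * x := by linear_combination -h0
      rw [this]; simp
    · by_cases h1 : (x : ℂ) + y * ω = 0
      · exact ⟨0, 0, by simp [h1]⟩
      refine ⟨x / (x ^ 2 - D * y ^ 2), - y / (x ^ 2 - D * y ^ 2), ?_⟩
      push_cast
      have e : (x : ℂ) ^ 2 - D * y ^ 2 = (x + y * ω) * (x - y * ω) := by
        linear_combination (y : ℂ) ^ 2 * hω
      rw [e]
      field_simp
      ring

theorem conj_root (D : ℤ) (hD : D < 0) (ω : ℂ) (hω : ω ^ 2 = D) : ω.re = 0 ∧ ω.im ≠ 0 := by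
  have h1 := congrArg Complex.re hω
  have h2 := congrArg Complex.im hω
  simp [pow_two] at h1 h2
  have hD' : (D : ℝ) < 0 := by exact_mod_cast hD
  have him : ω.im ≠ 0 := by
    intro h; rw [h] at h1; nlinarith [mul_self_nonneg ω.re]
  refine ⟨?_, him⟩
  have : ω.re * ω.im = 0 := by linarith
  rcases mul_eq_zero.1 this with h | h
  · exact h
  · exact absurd h him

theorem rat_int (q : ℚ) (h : IsIntegral ℤ (q : ℂ)) : ∃ a : ℤ, q = a := by
  have h' : IsIntegral ℤ q := by
    have := (isIntegral_algebraMap_iff (R := ℤ) (A := ℚ) (B := ℂ) (x := q)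
      (algebraMap ℚ ℂ).injective).1 (by simpa using h)
    exact this
  obtain ⟨a, ha⟩ := IsIntegrallyClosed.isIntegral_iff.1 h'
  exact ⟨a, by simpa using ha.symm⟩

/-- parity of the 2-adic valuation -/
theorem two_adic (D : ℤ) (hD : D % 4 = 2) (W : ℤ) (hW : W % 2 = 1) (y : ℚ) : (D : ℚ) * y ^ 2 ≠ W := by
  intro h
  have : Fact (Nat.Prime 2) := ⟨Nat.prime_two⟩
  obtain ⟨E, hE⟩ : ∃ E, D = 2 * E := ⟨D / 2, by omega⟩
  have hy : y ≠ 0 := by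
    rintro rfl
    have : (W : ℚ) = 0 := by rw [← h]; ring
    have : W = 0 := by exact_mod_cast this
    omega
  have hE0 : (E : ℚ) ≠ 0 := by
    have : E ≠ 0 := by omega
    exact_mod_cast this
  have v0 : ∀ a : ℤ, a % 2 = 1 → padicValRat 2 (a : ℚ) = 0 := by
    intro a ha
    rw [padicValRat.of_int, padicValInt.eq_zero_of_not_dvd (by push_cast; omega)]
    rfl
  have h1 := congrArg (padicValRat 2) h
  rw [v0 W hW, hE] at h1
  push_cast at h1
  rw [padicValRat.mul (by positivity) (by positivity), padicValRat.mul (by norm_num) hE0,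
    v0 E (by omega), padicValRat.pow] at h1
  have h2 : padicValRat 2 (2 : ℚ) = 1 := by
    simpa using padicValRat.self (p := 2) (by norm_num)
  rw [h2] at h1
  push_cast at h1
  omega

theorem int_form (D : ℤ) (hD0 : D < 0) (hD : D % 4 = 2) (ω : ℂ) (hω : ω ^ 2 = D) (z : ℂ)
    (hz : z ∈ IntermediateField.adjoin ℚ {ω}) (hint : IsIntegral ℤ z) :
    ∃ (x t : ℤ) (y : ℚ), z = x + y * ω ∧ (D : ℚ) * y ^ 2 = -t := by
  obtain ⟨x, y, rfl⟩ := Qsqrt_mem D ω hω z hz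
  obtain ⟨hre, him⟩ := conj_root D hD0 ω hω
  have hconj : (starRingEnd ℂ) ((x : ℂ) + y * ω) = x - y * ω := by
    have : (starRingEnd ℂ) ω = -ω := by
      apply Complex.ext <;> simp [hre]
    simp [this]
    ring
  have hint' : IsIntegral ℤ ((x : ℂ) - y * ω) := by
    rw [← hconj]
    exact hint.map (starRingEnd ℂ).toIntAlgHom
  obtain ⟨X, hX⟩ := rat_int (2 * x) (by
    have e : ((2 * x : ℚ) : ℂ) = ((x : ℂ) + y * ω) + (x - y * ω) := by push_cast; ring
    rw [e]; exact hint.add hint')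
  obtain ⟨N, hN⟩ := rat_int (x ^ 2 - D * y ^ 2) (by
    have e : ((x ^ 2 - D * y ^ 2 : ℚ) : ℂ) = ((x : ℂ) + y * ω) * (x - y * ω) := by
      push_cast; linear_combination (y : ℂ) ^ 2 * hω
    rw [e]; exact hint.mul hint')
  have hW : (D : ℚ) * (2 * y) ^ 2 = (X ^ 2 - 4 * N : ℤ) := by
    push_cast; rw [← hX, ← hN]; ring
  rcases Int.even_or_odd' X with ⟨a, ha | ha⟩
  · have hx : x = a := by
      rw [ha] at hX; push_cast at hX; linarith
    refine ⟨a, N - a ^ 2, y, by simp [hx], ?_⟩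
    push_cast; rw [← hN, hx]; ring
  · exfalso
    refine two_adic D hD _ ?_ _ hW
    have : X ^ 2 - 4 * N = 2 * (2 * a ^ 2 + 2 * a - 2 * N) + 1 := by rw [ha]; ring
    omega

theorem normSq_form (D : ℤ) (hD0 : D < 0) (ω : ℂ) (hω : ω ^ 2 = D) (x t : ℤ) (y : ℚ)
    (h : (D : ℚ) * y ^ 2 = -t) : Complex.normSq (x + y * ω) = ((x ^ 2 + t : ℤ) : ℝ) := by
  obtain ⟨hre, him⟩ := conj_root D hD0 ω hω
  have h1 := congrArg Complex.re hω
  simp [pow_two, hre] at h1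
  have h' : (D : ℝ) * y ^ 2 = -t := by exact_mod_cast h
  simp [Complex.normSq_apply, hre]
  linear_combination (-(y : ℝ) ^ 2) * h1 - h'

theorem unit_form (D : ℤ) (hD0 : D < 0) (hD : D % 4 = 2) (ω : ℂ) (hω : ω ^ 2 = D) (u v : ℂ)
    (hu : u ∈ IntermediateField.adjoin ℚ {ω}) (hui : IsIntegral ℤ u)
    (hv : v ∈ IntermediateField.adjoin ℚ {ω}) (hvi : IsIntegral ℤ v) (huv : u * v = 1) :
    u = 1 ∨ u = -1 := by
  obtain ⟨x, t, y, rfl, ht⟩ := int_form D hD0 hD ω hω u hu hui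
  obtain ⟨x', t', y', rfl, ht'⟩ := int_form D hD0 hD ω hω v hv hvi
  have h := congrArg Complex.normSq huv
  rw [map_mul, normSq_form D hD0 ω hω x t y ht, normSq_form D hD0 ω hω x' t' y' ht', map_one] at h
  have h1 : (x ^ 2 + t) * (x' ^ 2 + t') = 1 := by exact_mod_cast h
  have tpos : 0 ≤ t := by
    have hDq : (D : ℚ) < 0 := by exact_mod_cast hD0
    have : (0 : ℚ) ≤ t := by nlinarith [sq_nonneg y]
    exact_mod_cast this
  have h2 : x ^ 2 + t = 1 := by
    rcases Int.eq_one_or_neg_one_of_mul_eq_one h1 with h | h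
    · exact h
    · nlinarith [sq_nonneg x]
  have t1 : t ≤ 1 := by nlinarith [sq_nonneg x]
  have t0 : t ≠ 1 := by
    intro h
    exact two_adic D hD (-1) (by norm_num) y (by rw [ht, h]; norm_num)
  have t0 : t = 0 := by omega
  have hy : y = 0 := by
    rw [t0] at ht
    have hDq : (D : ℚ) ≠ 0 := by exact_mod_cast hD0.ne
    simpa [hDq] using ht
  rw [t0, add_zero] at h2
  rcases (show x = 1 ∨ x = -1 from by simpa using h2) with h | h
  · left; simp [h, hy]
  · right; simp [h, hy]

theorem no_root (n : ℕ) (hnodd : Odd n) (k : ℤ) (hk : 2 ≤ k) (D : ℤ)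
    (hDdef : D = 1 - (4 * k ^ n - 1) ^ n) (hD0 : D < 0) (hD : D % 4 = 2)
    (ω : ℂ) (hω : ω ^ 2 = D) (p : ℕ) (hp : p.Prime) (hpn : p ∣ n) (β : ℂ)
    (hβ : β ∈ IntermediateField.adjoin ℚ {ω}) (hβi : IsIntegral ℤ β) (h : β ^ p = 1 + ω) :
    False := by
  have hn0 : 0 < n := hnodd.pos
  have hpodd : Odd p := hnodd.of_dvd_nat hpn
  have hp3 : 3 ≤ p := by
    have := hp.two_le
    obtain ⟨r, hr⟩ := hpodd
    omega
  have hm : 0 < 4 * k ^ n - 1 := by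
    have : 0 < k ^ n := by positivity
    omega
  obtain ⟨x, t, y, rfl, ht⟩ := int_form D hD0 hD ω hω β hβ hβi
  obtain ⟨hre, him⟩ := conj_root D hD0 ω hω
  have tpos : 0 ≤ t := by
    have hDq : (D : ℚ) < 0 := by exact_mod_cast hD0
    have : (0 : ℚ) ≤ t := by nlinarith [sq_nonneg y]
    exact_mod_cast this
  have hB : ((y : ℂ) * ω) ^ 2 = ((-t : ℤ) : ℂ) := by
    rw [mul_pow, hω]
    have : (D : ℂ) * y ^ 2 = -t := by exact_mod_cast congrArg (fun q : ℚ => (q : ℂ)) ht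
    push_cast; rw [← this]; ring
  have hN := congrArg Complex.normSq h
  have e1 : (1 + ω : ℂ) = ((1 : ℤ) : ℂ) + ((1 : ℚ) : ℂ) * ω := by push_cast; ring
  rw [map_pow, normSq_form D hD0 ω hω x t y ht, e1,
    normSq_form D hD0 ω hω 1 (-D) 1 (by push_cast; ring)] at hN
  have hN' : (x ^ 2 + t) ^ p = ((4 * k ^ n - 1) ^ (n / p)) ^ p := by
    rw [← pow_mul, Nat.div_mul_cancel hpn]
    have : (x ^ 2 + t) ^ p = 1 ^ 2 + -D := by exact_mod_cast hN
    rw [this, hDdef]; ring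
  have hN2 : x ^ 2 + t = (4 * k ^ n - 1) ^ (n / p) :=
    (pow_left_inj₀ (by positivity) (by positivity) hp.ne_zero).1 hN'
  rw [rs_complex x (-t) _ hB] at h
  have hR : (rs x (-t) p).1 = 1 := by
    have := congrArg Complex.re h
    simp [hre] at this
    exact_mod_cast this
  have hx : x = 1 ∨ x = -1 := by
    obtain ⟨r, hr⟩ := hpodd
    have := (rs_dvd x (-t) r).1
    rw [← hr, hR] at this
    exact Int.isUnit_iff.1 (isUnit_of_dvd_one this)
  have hx2 : x ^ 2 = 1 := by rcases hx with rfl | rfl <;> norm_num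
  have hmod : -t ≡ 2 [ZMOD 4 * k ^ n] := by
    have h1 : 4 * k ^ n - 1 ≡ -1 [ZMOD 4 * k ^ n] := by
      rw [Int.modEq_iff_dvd]; exact ⟨-1, by ring⟩
    have h2 := h1.pow (n / p)
    have hodd2 : Odd (n / p) := hnodd.of_dvd_nat (Nat.div_dvd_of_dvd hpn)
    rw [← hN2, hodd2.neg_one_pow, hx2] at h2
    have h3 := (h2.neg).add_right 1
    have e : -(1 + t) + 1 = -t := by ring
    rw [e] at h3
    simpa using h3
  have h5 := (rs_modEq x (-t) 2 _ hmod p).1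
  rw [hR] at h5
  exact rs_core k hk n p (Nat.le_of_dvd hn0 hpn) hp3 hpodd x hx h5.symm

theorem class_dvd (n : ℕ) (hnodd : Odd n) (k : ℤ) (hk : 2 ≤ k) (D : ℤ)
    (hDdef : D = 1 - (4 * k ^ n - 1) ^ n) : n ∣ classNumSqrt D := by
  have hn0 : 0 < n := hnodd.pos
  have hkn : 2 ≤ k ^ n := hk.trans (le_self_pow₀ (by omega) hn0.ne')
  have hD0 : D < 0 := by
    have : 4 * k ^ n - 1 ≤ (4 * k ^ n - 1) ^ n := le_self_pow₀ (by omega) hn0.ne'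
    omega
  have hD : D % 4 = 2 := by
    have h1 : 4 * k ^ n - 1 ≡ -1 [ZMOD 4] := by
      rw [Int.modEq_iff_dvd]; exact ⟨-k ^ n, by ring⟩
    have h2 := h1.pow n
    rw [hnodd.neg_one_pow] at h2
    rw [hDdef]
    unfold Int.ModEq at h2
    omega
  have hω := Qsqrt_root_sq D
  unfold classNumSqrt
  have hmem : (D : ℂ) ^ ((1 : ℂ) / 2) ∈ Qsqrt D := IntermediateField.mem_adjoin_simple_self ℚ _
  have hK : Qsqrt D = IntermediateField.adjoin ℚ {(D : ℂ) ^ ((1 : ℂ) / 2)} := rfl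
  set ω := (D : ℂ) ^ ((1 : ℂ) / 2) with hωdef
  have hωint : IsIntegral ℤ ω := by
    refine IsIntegral.of_pow (n := 2) (by norm_num) ?_
    rw [hω]
    exact isIntegral_algebraMap (R := ℤ) (A := ℂ) (x := D)
  have : FiniteDimensional ℚ (Qsqrt D) :=
    IntermediateField.adjoin.finiteDimensional (hωint.tower_top)
  have : NumberField (Qsqrt D) := ⟨⟩
  have hinj : Function.Injective (algebraMap (Qsqrt D) ℂ) := (algebraMap (Qsqrt D) ℂ).injective
  let w : NumberField.RingOfIntegers (Qsqrt D) :=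
    ⟨⟨ω, hmem⟩, (isIntegral_algebraMap_iff (R := ℤ) hinj).1 hωint⟩
  let φ : NumberField.RingOfIntegers (Qsqrt D) →+* ℂ :=
    (algebraMap (Qsqrt D) ℂ).comp (algebraMap _ (Qsqrt D))
  have hφ : Function.Injective φ := hinj.comp NumberField.RingOfIntegers.coe_injective
  have hφw : φ w = ω := rfl
  have hφm : ∀ z, φ z ∈ IntermediateField.adjoin ℚ {ω} := fun z => by
    rw [← hK]; exact (algebraMap _ (Qsqrt D) z).2
  have hφi : ∀ z, IsIntegral ℤ (φ z) := fun z =>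
    (NumberField.RingOfIntegers.isIntegral z).map φ.toIntAlgHom
  have hw : w ^ 2 = (D : NumberField.RingOfIntegers (Qsqrt D)) := by
    apply hφ
    rw [map_pow, hφw, hω, map_intCast]
  have hprod : (1 + w) * (1 - w) =
      ((4 * k ^ n - 1 : ℤ) : NumberField.RingOfIntegers (Qsqrt D)) ^ n := by
    have e : (1 + w) * (1 - w) = 1 - w ^ 2 := by ring
    rw [e, hw, hDdef]; push_cast; ring
  refine cg_aux (1 + w) (1 - w) ((4 * k ^ n - 1 : ℤ)) n hn0 hprod ?_ ?_ ?_
  · obtain ⟨r, hr⟩ : ∃ r, 1 - D = 2 * r + 1 := ⟨(-D) / 2, by omega⟩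
    have hr' : (1 - D : NumberField.RingOfIntegers (Qsqrt D)) = 2 * r + 1 := by exact_mod_cast hr
    refine ⟨(1 - w) - r, -r, ?_⟩
    linear_combination hr' - hw
  · intro h
    have := congrArg φ h
    rw [map_add, hφw, map_one, map_zero] at this
    have h2 := congrArg Complex.re this
    simp [(conj_root D hD0 ω hω).1] at h2
  · intro p hp hpn β u h
    have hu := unit_form D hD0 hD ω hω (φ u) (φ (u⁻¹ : _ˣ)) (hφm _) (hφi _) (hφm _) (hφi _)
      (by rw [← map_mul]; simp)
    have hh := congrArg φ h
    rw [map_pow, map_mul, map_add, map_one, hφw] at hh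
    rcases hu with hu | hu <;> rw [hu] at hh
    · exact no_root n hnodd k hk D hDdef hD0 hD ω hω p hp hpn (φ β) (hφm _) (hφi _)
        (by rw [hh, one_mul])
    · have hpodd : Odd p := hnodd.of_dvd_nat hpn
      exact no_root n hnodd k hk D hDdef hD0 hD ω hω p hp hpn (-φ β) (neg_mem (hφm _))
        (hφi _).neg (by rw [hpodd.neg_pow, hh]; ring)

/-- Let `n ≥ 3` be an odd integer, `k ≥ 2` an integer, and `d = 4(1 − 4kⁿ)ⁿ`. Then
`d + 4 = 4(1 − (4kⁿ − 1)ⁿ)`, so `ℚ(√(d + 4)) = ℚ(√(1 − (4kⁿ − 1)ⁿ))`, and `n` divides the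
class number of `ℚ(√(d + 4))`. -/
theorem classNumber_dvd_d_add_four
    (n : ℕ) (hn : 3 ≤ n) (hnodd : Odd n) (k : ℤ) (hk : 2 ≤ k)
    (d : ℤ) (hd : d = 4 * (1 - 4 * k ^ n) ^ n) :
    d + 4 = 4 * (1 - (4 * k ^ n - 1) ^ n) ∧
      Qsqrt (d + 4) = Qsqrt (1 - (4 * k ^ n - 1) ^ n) ∧
      n ∣ classNumSqrt (d + 4) := by
  have h1 : d + 4 = 4 * (1 - (4 * k ^ n - 1) ^ n) := by
    have e : (1 - 4 * k ^ n) = -(4 * k ^ n - 1) := by ring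
    rw [hd, e, hnodd.neg_pow]; ring
  have h2 : Qsqrt (d + 4) = Qsqrt (1 - (4 * k ^ n - 1) ^ n) := by rw [h1, Qsqrt_four]
  refine ⟨h1, h2, ?_⟩
  have h3 := class_dvd n hnodd k hk _ rfl
  have gen : ∀ K L : IntermediateField ℚ ℂ, K = L →
      Nat.card (ClassGroup (NumberField.RingOfIntegers K)) =
        Nat.card (ClassGroup (NumberField.RingOfIntegers L)) := by
    rintro K L rfl
    rfl
  have h4 : classNumSqrt (d + 4) = classNumSqrt (1 - (4 * k ^ n - 1) ^ n) := gen _ _ h2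
  rw [h4]
  exact h3
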